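/- arXiv:2601.01137 — 7 statements merged into one kernel-verified Lean document; each statement's English description precedes it below -/
import Mathlib

section
/- Let N ≥ 1, let a, b be polynomials over F₂ = ZMod 2 of degree < N with coefficient vectors va, vb ∈ (ZMod 2)^N, let A = circulant va and B = circulant vb, and let g = gcd(gcd(a,b), X^N − 1) in (ZMod 2)[X]. Then the rank over F₂ of the N×2N block matrix H_X = [A B] equals N − deg g. -/
open Matrix Polynomial

/-- The polynomial `∑ i, vᵢ Xⁱ` associated with a coefficient vector `v ∈ (ZMod 2)^N`. -/
noncomputable def polyOfVec {N : ℕ} (v : Fin N → ZMod 2) : Polynomial (ZMod 2) :=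
  ∑ i : Fin N, Polynomial.C (v i) * Polynomial.X ^ (i : ℕ)

theorem coeff_polyOfVec_aux {N : ℕ} (v : Fin N → ZMod 2) (i : Fin N) :
    (polyOfVec v).coeff i = v i := by
  unfold polyOfVec
  rw [Polynomial.finsetSum_coeff, Finset.sum_eq_single i]
  · simp
  · intro j _ hj
    rw [Polynomial.coeff_C_mul, Polynomial.coeff_X_pow, if_neg, mul_zero]
    exact fun h => hj (Fin.ext h.symm)
  · simp

theorem degree_polyOfVec_aux {N : ℕ} (v : Fin N → ZMod 2) :
    (polyOfVec v).degree < N := by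
  unfold polyOfVec
  refine lt_of_le_of_lt (Polynomial.degree_sum_le _ _) ?_
  rw [Finset.sup_lt_iff (by exact WithBot.bot_lt_coe N)]
  intro i _
  exact lt_of_le_of_lt (Polynomial.degree_C_mul_X_pow_le _ _) (by exact_mod_cast i.2)

theorem polyOfVec_inj_aux {N : ℕ} {v w : Fin N → ZMod 2} (h : polyOfVec v = polyOfVec w) :
    v = w := by
  ext i
  rw [← coeff_polyOfVec_aux v i, h, coeff_polyOfVec_aux]

theorem polyOfVec_surj_aux {N : ℕ} (p : Polynomial (ZMod 2)) (hp : p.degree < N) :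
    ∃ v : Fin N → ZMod 2, polyOfVec v = p := by
  refine ⟨fun i => p.coeff i, ?_⟩
  ext n
  by_cases h : n < N
  · exact coeff_polyOfVec_aux (fun i : Fin N => p.coeff i) ⟨n, h⟩
  · rw [Polynomial.coeff_eq_zero_of_degree_lt, Polynomial.coeff_eq_zero_of_degree_lt]
    · exact lt_of_lt_of_le hp (by exact_mod_cast not_lt.mp h)
    · exact lt_of_lt_of_le (degree_polyOfVec_aux _) (by exact_mod_cast not_lt.mp h)

theorem polyOfVec_add_aux {N : ℕ} (v w : Fin N → ZMod 2) :
    polyOfVec (v + w) = polyOfVec v + polyOfVec w := by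
  simp [polyOfVec, add_mul, Finset.sum_add_distrib]

theorem polyOfVec_smul_aux {N : ℕ} (c : ZMod 2) (v : Fin N → ZMod 2) :
    polyOfVec (c • v) = c • polyOfVec v := by
  simp [polyOfVec, Finset.smul_sum, Polynomial.smul_eq_C_mul, mul_assoc]

theorem dvd_circulant_aux {N : ℕ} (hN : 1 ≤ N) (v w : Fin N → ZMod 2) :
    (X ^ N - 1 : Polynomial (ZMod 2)) ∣
      polyOfVec (Matrix.circulant v *ᵥ w) - polyOfVec v * polyOfVec w := by
  have : NeZero N := ⟨by omega⟩
  rw [← AdjoinRoot.mk_eq_mk]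
  set f : Polynomial (ZMod 2) := X ^ N - 1 with hf
  have hx : (AdjoinRoot.mk f X) ^ N = 1 := by
    have : AdjoinRoot.mk f (X ^ N) = AdjoinRoot.mk f 1 := by
      rw [AdjoinRoot.mk_eq_mk]
    simpa using this
  generalize AdjoinRoot.mk f = m at *
  simp only [polyOfVec, map_sum, map_mul, map_pow, Matrix.mulVec, dotProduct,
    Matrix.circulant_apply]
  rw [Finset.sum_mul_sum]
  conv_rhs => rw [Finset.sum_comm]
  simp only [Finset.sum_mul]
  conv_lhs => rw [Finset.sum_comm]
  refine Finset.sum_congr rfl fun j _ => ?_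
  rw [← Equiv.sum_comp (Equiv.addRight j)]
  refine Finset.sum_congr rfl fun k _ => ?_
  have h1 : m X ^ (((k + j : Fin N)) : ℕ) = m X ^ (k : ℕ) * m X ^ (j : ℕ) := by
    rw [← pow_add, Fin.val_add]
    conv_rhs => rw [← Nat.mod_add_div ((k : ℕ) + j) N, pow_add, pow_mul, hx, one_pow, mul_one]
  simp only [Equiv.coe_addRight, add_sub_cancel_right, h1]
  ring

/-- For a coprime BB code with `H_X = [A B]`, `A = circulant va`,
`B = circulant vb`, and `g = gcd(gcd(a,b), X^N - 1)`, one has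
`rank H_X = N - deg g`. -/
theorem rank_fromCols_circulant (N : ℕ) (hN : 1 ≤ N) (va vb : Fin N → ZMod 2)
    (a b : Polynomial (ZMod 2)) (ha : a = polyOfVec va) (hb : b = polyOfVec vb)
    (g : Polynomial (ZMod 2)) (hg : g = gcd (gcd a b) (Polynomial.X ^ N - 1)) :
    (Matrix.fromCols (Matrix.circulant va) (Matrix.circulant vb)).rank =
      N - g.natDegree := by
  have hfm : (X ^ N - 1 : Polynomial (ZMod 2)).Monic := by
    simpa using Polynomial.monic_X_pow_sub_C (1 : ZMod 2) (by omega : N ≠ 0)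
  have hfd : (X ^ N - 1 : Polynomial (ZMod 2)).degree = N := by
    simpa using Polynomial.degree_X_pow_sub_C (by omega : 0 < N) (1 : ZMod 2)
  have hga : g ∣ a := hg ▸ (gcd_dvd_left _ _).trans (gcd_dvd_left _ _)
  have hgb : g ∣ b := hg ▸ (gcd_dvd_left _ _).trans (gcd_dvd_right _ _)
  have hgf : g ∣ X ^ N - 1 := hg ▸ gcd_dvd_right _ _
  have hbez : ∃ p q r, g = a * p + b * q + (X ^ N - 1) * r := by
    obtain ⟨s, r, h1⟩ := exists_gcd_eq_mul_add_mul (gcd a b) (X ^ N - 1 : Polynomial (ZMod 2))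
    obtain ⟨p, q, h2⟩ := exists_gcd_eq_mul_add_mul a b
    refine ⟨p * s, q * s, r, ?_⟩
    rw [hg, h1]
    nth_rewrite 1 [h2]
    ring
  clear hg
  have hg0 : g ≠ 0 := ne_zero_of_dvd_ne_zero hfm.ne_zero hgf
  have hcirc := dvd_circulant_aux hN
  have hrep : ∀ p : Polynomial (ZMod 2), ∃ w : Fin N → ZMod 2,
      (X ^ N - 1 : Polynomial (ZMod 2)) ∣ polyOfVec w - p := by
    intro p
    obtain ⟨w, hw⟩ := polyOfVec_surj_aux (N := N) (p %ₘ (X ^ N - 1))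
      (hfd ▸ Polynomial.degree_modByMonic_lt p hfm)
    refine ⟨w, -(p /ₘ (X ^ N - 1)), ?_⟩
    rw [hw]
    linear_combination Polynomial.modByMonic_add_div p (X ^ N - 1 : Polynomial (ZMod 2))
  generalize (X ^ N - 1 : Polynomial (ZMod 2)) = f at *
  let φ : (Fin N → ZMod 2) →ₗ[ZMod 2] (Polynomial (ZMod 2) ⧸ Ideal.span {g}) :=
    { toFun := fun v => Ideal.Quotient.mk _ (polyOfVec v)
      map_add' := fun v w => by rw [polyOfVec_add_aux, map_add]
      map_smul' := fun c v => by rw [polyOfVec_smul_aux]; rfl }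
  have hφ : ∀ v, φ v = 0 ↔ g ∣ polyOfVec v := fun v => by
    change Ideal.Quotient.mk _ (polyOfVec v) = 0 ↔ _
    rw [Ideal.Quotient.eq_zero_iff_mem, Ideal.mem_span_singleton]
  have hsurj : Function.Surjective φ := by
    intro y
    obtain ⟨p, rfl⟩ := Ideal.Quotient.mk_surjective y
    obtain ⟨w, hw⟩ := hrep p
    refine ⟨w, ?_⟩
    change Ideal.Quotient.mk _ (polyOfVec w) = _
    rw [Ideal.Quotient.eq, Ideal.mem_span_singleton]
    exact hgf.trans hw
  have hker : LinearMap.ker φ =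
      LinearMap.range (Matrix.fromCols (Matrix.circulant va) (Matrix.circulant vb)).mulVecLin := by
    ext v
    rw [LinearMap.mem_ker, hφ]
    constructor
    · rintro ⟨c, hc⟩
      obtain ⟨p, q, r, h⟩ := hbez
      obtain ⟨w1, e1, h1⟩ := hrep (p * c)
      obtain ⟨w2, e2, h2⟩ := hrep (q * c)
      refine ⟨Sum.elim w1 w2, ?_⟩
      rw [Matrix.mulVecLin_apply, Matrix.fromCols_mulVec_sumElim]
      apply polyOfVec_inj_aux
      rw [← sub_eq_zero]
      refine Polynomial.eq_zero_of_dvd_of_degree_lt (p := f) ?_ ?_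
      · obtain ⟨d1, k1⟩ := hcirc va w1
        obtain ⟨d2, k2⟩ := hcirc vb w2
        rw [← ha] at k1
        rw [← hb] at k2
        rw [polyOfVec_add_aux, hc]
        refine ⟨d1 + d2 + a * e1 + b * e2 - r * c, ?_⟩
        linear_combination k1 + k2 + a * h1 + b * h2 - c * h
      · rw [hfd]
        exact lt_of_le_of_lt (Polynomial.degree_sub_le _ _)
          (max_lt (degree_polyOfVec_aux _) (degree_polyOfVec_aux _))
    · rintro ⟨w, rfl⟩
      rw [Matrix.mulVecLin_apply, ← Sum.elim_comp_inl_inr w, Matrix.fromCols_mulVec_sumElim,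
        polyOfVec_add_aux]
      refine dvd_add ?_ ?_
      · refine (dvd_iff_dvd_of_dvd_sub (hgf.trans (hcirc va _))).2 ?_
        exact (ha ▸ hga).mul_right _
      · refine (dvd_iff_dvd_of_dvd_sub (hgf.trans (hcirc vb _))).2 ?_
        exact (hb ▸ hgb).mul_right _
  have hdim := LinearMap.finrank_range_add_finrank_ker φ
  rw [LinearMap.range_eq_top.2 hsurj, finrank_top, finrank_quotient_span_eq_natDegree, hker,
    Module.finrank_fin_fun] at hdim
  rw [Matrix.rank]
  omega
end

section
/- Let N ≥ 1 and let g be a polynomial over F₂ = ZMod 2 that divides X^N − 1. Then the principal ideal generated by the image ḡ of g in the quotient ring R = (ZMod 2)[X]/(X^N − 1), viewed as an F₂-vector subspace of R, has dimension N − deg g. -/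
set_option synthInstance.maxHeartbeats 1000000

open Polynomial

/-- If `g ∣ X^N - 1` over `F₂`, the principal ideal generated by the image
of `g` in `(ZMod 2)[X]/(X^N - 1)`, viewed as an `F₂`-subspace, has dimension
`N - deg g`. -/
theorem finrank_span_image_divisor (N : ℕ) (hN : 1 ≤ N) (g : Polynomial (ZMod 2))
    (hdvd : g ∣ Polynomial.X ^ N - 1)
    (I : Ideal (Polynomial (ZMod 2)))
    (hI : I = Ideal.span {Polynomial.X ^ N - 1}) :
    Module.finrank (ZMod 2)
      ((Ideal.span {Ideal.Quotient.mk I g}).restrictScalars (ZMod 2)) =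
      N - g.natDegree := by
  subst hI
  have hm : (X ^ N - 1 : (ZMod 2)[X]).Monic := by
    have := monic_X_pow_sub_C (1 : ZMod 2) (n := N) (by omega)
    simpa using this
  have hd : (X ^ N - 1 : (ZMod 2)[X]).natDegree = N := by
    have := natDegree_X_pow_sub_C (R := ZMod 2) (n := N) (r := 1)
    simpa using this
  have hle : Ideal.span {(X ^ N - 1 : (ZMod 2)[X])} ≤ Ideal.span {g} :=
    Ideal.span_singleton_le_span_singleton.mpr hdvd
  have hfin : Module.Finite (ZMod 2) ((ZMod 2)[X] ⧸ Ideal.span {(X ^ N - 1 : (ZMod 2)[X])}) :=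
    hm.finite_quotient
  let f := (Ideal.Quotient.factorₐ (ZMod 2) hle).toLinearMap
  have hsurj : Function.Surjective f := Ideal.Quotient.factor_surjective hle
  have hker : LinearMap.ker f = (Ideal.span {Ideal.Quotient.mk
      (Ideal.span {(X ^ N - 1 : (ZMod 2)[X])}) g}).restrictScalars (ZMod 2) := by
    ext x
    obtain ⟨p, rfl⟩ := Ideal.Quotient.mk_surjective x
    have h1 : f (Ideal.Quotient.mk _ p) = Ideal.Quotient.mk _ p := rfl
    rw [LinearMap.mem_ker, h1, Ideal.Quotient.eq_zero_iff_mem, Submodule.restrictScalars_mem,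
      Ideal.mem_span_singleton, Ideal.mem_span_singleton]
    constructor
    · exact fun h => map_dvd _ h
    · rintro ⟨c, hc⟩
      obtain ⟨q, rfl⟩ := Ideal.Quotient.mk_surjective c
      rw [← map_mul, Ideal.Quotient.eq, Ideal.mem_span_singleton] at hc
      have := (hdvd.trans hc).add (dvd_mul_right g q)
      simpa using this
  have key := LinearMap.finrank_range_add_finrank_ker f
  rw [LinearMap.range_eq_top.mpr hsurj, finrank_top, hker, finrank_quotient_span_eq_natDegree,
    finrank_quotient_span_eq_natDegree, hd] at key
  omega
end

section
/- Let N ≥ 1, let g be a polynomial over F₂ = ZMod 2 dividing X^N − 1, and let h = (X^N − 1)/g be the check polynomial, so that g·h = X^N − 1. In the quotient ring R = (ZMod 2)[X]/(X^N − 1), the annihilator of the principal ideal generated by ḡ equals the principal ideal generated by h̄, i.e. { u ∈ R : u·ḡ = 0 } = Ideal.span {h̄}; moreover this annihilator, as an F₂-subspace of R, has dimension deg g. -/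
set_option synthInstance.maxHeartbeats 1000000

open Polynomial

/-- If `g·h = X^N - 1` over `F₂`, then in `(ZMod 2)[X]/(X^N - 1)` the
annihilator of the principal ideal generated by `ḡ`, i.e. `{u : u·ḡ = 0}`, equals the
principal ideal generated by `h̄`, and has `F₂`-dimension `deg g`. -/
theorem annihilator_span_eq_span_check (N : ℕ) (hN : 1 ≤ N)
    (g h : Polynomial (ZMod 2)) (hgh : g * h = Polynomial.X ^ N - 1)
    (I : Ideal (Polynomial (ZMod 2)))
    (hI : I = Ideal.span {Polynomial.X ^ N - 1}) :
    {u : Polynomial (ZMod 2) ⧸ I | u * Ideal.Quotient.mk I g = 0} =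
      (Ideal.span {Ideal.Quotient.mk I h} : Set (Polynomial (ZMod 2) ⧸ I)) ∧
    Module.finrank (ZMod 2)
      ((Ideal.span {Ideal.Quotient.mk I h}).restrictScalars (ZMod 2)) =
      g.natDegree := by
  have hne : (X ^ N - 1 : (ZMod 2)[X]) ≠ 0 := by
    have := (monic_X_pow_sub_C (1 : ZMod 2) (n := N) (by omega)).ne_zero
    simpa using this
  have hg : g ≠ 0 := by rintro rfl; simp at hgh; exact hne hgh.symm
  have hh : h ≠ 0 := by rintro rfl; simp at hgh; exact hne hgh.symm
  have hmem : ∀ p : (ZMod 2)[X], Ideal.Quotient.mk I p = 0 ↔ g * h ∣ p := by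
    intro p
    rw [Ideal.Quotient.eq_zero_iff_mem, hI, Ideal.mem_span_singleton, hgh]
  constructor
  · ext u
    obtain ⟨p, rfl⟩ := Ideal.Quotient.mk_surjective u
    rw [Set.mem_setOf_eq, SetLike.mem_coe, Ideal.mem_span_singleton, ← map_mul, hmem, mul_comm p g,
      mul_dvd_mul_iff_left hg]
    constructor
    · exact fun hd => map_dvd _ hd
    · rintro ⟨c, hc⟩
      obtain ⟨q, rfl⟩ := Ideal.Quotient.mk_surjective c
      rw [← map_mul, ← sub_eq_zero, ← map_sub, hmem] at hc
      exact (dvd_sub_left (dvd_mul_right h q)).1 ((dvd_mul_left h g).trans hc)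
  · let φ : (ZMod 2)[X] →ₗ[ZMod 2] ((ZMod 2)[X] ⧸ I) :=
      (Ideal.Quotient.mkₐ (ZMod 2) I).toLinearMap ∘ₗ LinearMap.mulLeft (ZMod 2) h
    have hφ : ∀ p, φ p = Ideal.Quotient.mk I (h * p) := fun p => rfl
    have hr : (Ideal.span {Ideal.Quotient.mk I h}).restrictScalars (ZMod 2) =
        LinearMap.range φ := by
      ext u
      rw [Submodule.restrictScalars_mem, Ideal.mem_span_singleton, LinearMap.mem_range]
      constructor
      · rintro ⟨c, rfl⟩
        obtain ⟨q, rfl⟩ := Ideal.Quotient.mk_surjective c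
        exact ⟨q, by rw [hφ, map_mul]⟩
      · rintro ⟨q, rfl⟩
        exact ⟨Ideal.Quotient.mk I q, by rw [hφ, map_mul]⟩
    have hk : LinearMap.ker φ = (Ideal.span {g}).restrictScalars (ZMod 2) := by
      ext p
      rw [Submodule.restrictScalars_mem, Ideal.mem_span_singleton, LinearMap.mem_ker, hφ, hmem,
        mul_comm g h, mul_dvd_mul_iff_left hh]
    rw [hr, ← finrank_quotient_span_eq_natDegree (f := g), ← φ.quotKerEquivRange.finrank_eq, hk]
    exact (Submodule.Quotient.restrictScalarsEquiv (ZMod 2) (Ideal.span {g})).finrank_eq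
end

section
/- Let N ≥ 1, let a, b be polynomials over F₂ = ZMod 2 of degree < N with coefficient vectors va, vb ∈ (ZMod 2)^N, let A = circulant va, B = circulant vb, H_X = [A B], H_Z = [Bᵀ Aᵀ], and let g = gcd(gcd(a,b), X^N − 1) with deg g ≥ 1. Setting n := 2N, k := 2N − rank H_X − rank H_Z, and r_X := N − rank H_X, the fraction of redundant stabilizers equals the quantum rate: r_X · n = k · N (i.e. r_X/N = k/n as rationals). -/
open Matrix Polynomial

/-- For a coprime BB code with `n = 2N`, `k = 2N - rank H_X - rank H_Z`
and `r_X = N - rank H_X`, the redundancy density equals the quantum rate: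
`r_X · n = k · N`, i.e. `r_X / N = k / n` as rationals. -/
theorem bb_rate_redundancy_equality (N : ℕ) (hN : 1 ≤ N) (va vb : Fin N → ZMod 2)
    (a b : Polynomial (ZMod 2)) (ha : a = polyOfVec va) (hb : b = polyOfVec vb)
    (g : Polynomial (ZMod 2)) (hg : g = gcd (gcd a b) (Polynomial.X ^ N - 1))
    (hdeg : 1 ≤ g.natDegree)
    (HX HZ : Matrix (Fin N) (Fin N ⊕ Fin N) (ZMod 2))
    (hHX : HX = Matrix.fromCols (Matrix.circulant va) (Matrix.circulant vb))
    (hHZ : HZ = Matrix.fromCols (Matrix.circulant vb)ᵀ (Matrix.circulant va)ᵀ)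
    (n k rX : ℕ) (hn : n = 2 * N)
    (hk : k = 2 * N - HX.rank - HZ.rank) (hrX : rX = N - HX.rank) :
    rX * n = k * N ∧ (rX : ℚ) / (N : ℚ) = (k : ℚ) / (n : ℚ) := by
  have hr : HX.rank = HZ.rank := by
    obtain ⟨m, rfl⟩ : ∃ m, N = m + 1 := ⟨N - 1, by omega⟩
    have h : HZ = HX.submatrix (Equiv.neg (Fin (m + 1)))
        ((Equiv.sumComm _ _).trans
          (Equiv.sumCongr (Equiv.neg (Fin (m + 1))) (Equiv.neg (Fin (m + 1))))) := by
      subst hHX hHZ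
      ext i j
      have e : ∀ j : Fin (m + 1), -i - -j = j - i := fun j => neg_sub_neg i j
      rcases j with j | j <;> simp [Matrix.circulant_apply, e, -sub_neg_eq_add]
    rw [h, Matrix.rank_submatrix]
  have hk2 : k = 2 * rX := by omega
  subst hn hk2
  refine ⟨by ring, ?_⟩
  have hN0 : (N : ℚ) ≠ 0 := by
    have : N ≠ 0 := by omega
    exact_mod_cast this
  push_cast
  field_simp
end

section
/- (BCH bound.) Let F be a field of characteristic 2, let α ∈ F be a primitive N-th root of unity (i.e. α has multiplicative order N), and let c be a nonzero polynomial over F₂ = ZMod 2 with deg c < N. Suppose there exist integers b ≥ 0 and δ ≥ 2 such that c(α^{b+i}) = 0 for all i = 0, 1, …, δ−2, where c is evaluated in F via the canonical ring map ZMod 2 → F. Then the Hamming weight of c (the number of nonzero coefficients of c, i.e. c.support.card) is at least δ. -/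
open Polynomial

/-- BCH bound: If `α ∈ F` (char 2) has multiplicative order `N`, and the
nonzero polynomial `c` over `F₂` of degree `< N` vanishes (in `F`, via the canonical map
`ZMod 2 → F`) at `δ - 1` consecutive powers `α^b, …, α^{b+δ-2}`, then the Hamming
weight of `c` is at least `δ`. -/
theorem bch_bound (F : Type*) [Field F] [CharP F 2] (N : ℕ) (α : F)
    (hα : orderOf α = N)
    (c : Polynomial (ZMod 2)) (hc0 : c ≠ 0) (hcdeg : c.natDegree < N)
    (b δ : ℕ) (hδ : 2 ≤ δ)
    (hroots : ∀ i ≤ δ - 2,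
      Polynomial.eval₂ (ZMod.castHom (dvd_refl 2) F) (α ^ (b + i)) c = 0) :
    δ ≤ c.support.card := by
  by_contra hlt
  push Not at hlt
  have hα0 : α ≠ 0 := by
    rintro rfl
    have h0 : orderOf (0 : F) = 0 := orderOf_zero F
    omega
  let φ := ZMod.castHom (dvd_refl 2) F
  let e := c.support.equivFin.symm
  have hmem : ∀ j, ((e j : ℕ)) < orderOf α := fun j => by
    have := le_natDegree_of_mem_supp _ (e j).2
    omega
  have hf : Function.Injective (fun j => α ^ (e j : ℕ)) := by
    intro i j hij
    have h := pow_injOn_Iio_orderOf (hmem i) (hmem j) hij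
    exact e.injective (Subtype.ext h)
  have hv := Matrix.eq_zero_of_forall_pow_sum_mul_pow_eq_zero
    (v := fun j => φ (c.coeff (e j)) * α ^ (b * (e j : ℕ))) hf (by
      intro i
      have h := hroots i (by have := i.2; omega)
      rw [eval₂_eq_sum, Polynomial.sum, ← Finset.sum_coe_sort, ← e.sum_comp] at h
      rw [← h]
      refine Finset.sum_congr rfl fun j _ => ?_
      rw [← pow_mul, ← pow_mul, mul_assoc, ← pow_add]
      congr 2
      ring)
  have hpos : 0 < c.support.card := Finset.card_pos.mpr (support_nonempty.mpr hc0)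
  have h := congrFun hv ⟨0, hpos⟩
  have hc := mem_support_iff.mp (e ⟨0, hpos⟩).2
  rcases mul_eq_zero.mp h with h | h
  · exact hc (φ.injective (by rw [h, map_zero]))
  · exact pow_ne_zero _ hα0 h
end

section
/- (BCH bound for the syndrome code of a coprime BB code.) Let N ≥ 1, let a, b be polynomials over F₂ = ZMod 2, and let g = gcd(gcd(a,b), X^N − 1). Let F be a field of characteristic 2 containing a primitive N-th root of unity α, and suppose there exist integers b₀ ≥ 0 and δ ≥ 2 with g(α^{b₀+i}) = 0 for all i = 0, …, δ−2 (evaluation via the canonical map ZMod 2 → F). Then every nonzero polynomial c over ZMod 2 with deg c < N whose image c̄ in (ZMod 2)[X]/(X^N − 1) lies in the ideal generated by ā and b̄ has Hamming weight at least δ; i.e. the syndrome code generated by g has minimum distance d_S ≥ δ. -/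
open Polynomial

/-- BCH bound for the syndrome code of a coprime BB code: Let
`g = gcd(gcd(a,b), X^N - 1)` and suppose `g` vanishes at `δ - 1` consecutive powers of a
primitive `N`-th root of unity `α` in a field `F` of characteristic 2. Then every
nonzero `c` of degree `< N` whose class mod `X^N - 1` lies in the ideal generated by the
classes of `a` and `b` has Hamming weight at least `δ`. -/
theorem bch_bound_syndrome_code (N : ℕ) (hN : 1 ≤ N) (a b : Polynomial (ZMod 2))
    (g : Polynomial (ZMod 2)) (hg : g = gcd (gcd a b) (Polynomial.X ^ N - 1))
    (F : Type*) [Field F] [CharP F 2] (α : F) (hα : orderOf α = N)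
    (b₀ δ : ℕ) (hδ : 2 ≤ δ)
    (hroots : ∀ i ≤ δ - 2,
      Polynomial.eval₂ (ZMod.castHom (dvd_refl 2) F) (α ^ (b₀ + i)) g = 0)
    (I : Ideal (Polynomial (ZMod 2)))
    (hI : I = Ideal.span {Polynomial.X ^ N - 1})
    (c : Polynomial (ZMod 2)) (hc0 : c ≠ 0) (hcdeg : c.natDegree < N)
    (hmem : Ideal.Quotient.mk I c ∈
      Ideal.span {Ideal.Quotient.mk I a, Ideal.Quotient.mk I b}) :
    δ ≤ c.support.card := by
  have hag : g ∣ a := by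
    rw [hg]; exact (gcd_dvd_left _ _).trans (gcd_dvd_left _ _)
  have hbg : g ∣ b := by
    rw [hg]; exact (gcd_dvd_left _ _).trans (gcd_dvd_right _ _)
  have hxg : g ∣ Polynomial.X ^ N - 1 := by
    rw [hg]; exact gcd_dvd_right _ _
  have hcg : g ∣ c := by
    obtain ⟨u, v, huv⟩ := Ideal.mem_span_pair.1 hmem
    obtain ⟨u, rfl⟩ := Ideal.Quotient.mk_surjective u
    obtain ⟨v, rfl⟩ := Ideal.Quotient.mk_surjective v
    rw [← map_mul, ← map_mul, ← map_add, Ideal.Quotient.eq, hI,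
      Ideal.mem_span_singleton] at huv
    have h1 : g ∣ u * a + v * b := dvd_add (hag.mul_left _) (hbg.mul_left _)
    exact (dvd_sub_right h1).1 (hxg.trans huv)
  by_contra hlt
  push Not at hlt
  have hα0 : α ≠ 0 := by
    rintro rfl
    rw [orderOf_zero] at hα
    omega
  set φ : ZMod 2 →+* F := ZMod.castHom (dvd_refl 2) F with hφ
  have hsum : ∀ i < c.support.card, ∑ k ∈ c.support, φ (c.coeff k) * α ^ ((b₀ + i) * k) = 0 := by
    intro i hi
    have h0 : Polynomial.eval₂ φ (α ^ (b₀ + i)) c = 0 := by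
      obtain ⟨q, rfl⟩ := hcg
      rw [Polynomial.eval₂_mul, hroots i (by omega), zero_mul]
    rw [Polynomial.eval₂_eq_sum, Polynomial.sum_def] at h0
    simpa only [pow_mul] using h0
  let e := c.support.equivFin
  have hinj : Function.Injective (fun j => α ^ ((e.symm j : c.support) : ℕ)) := by
    intro x y hxy
    have hb : ∀ z : c.support, (z : ℕ) < orderOf α := fun z =>
      lt_of_le_of_lt (Polynomial.le_natDegree_of_mem_supp _ z.2) (hα ▸ hcdeg)
    have := pow_injOn_Iio_orderOf (hb (e.symm x)) (hb (e.symm y)) hxy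
    exact e.symm.injective (Subtype.ext this)
  have hz := Matrix.eq_zero_of_forall_pow_sum_mul_pow_eq_zero (f := fun j => α ^ ((e.symm j : c.support) : ℕ))
    (v := fun j => φ (c.coeff (e.symm j : c.support)) * α ^ (b₀ * ((e.symm j : c.support) : ℕ)))
    hinj (by
      intro i
      rw [← hsum i i.2, ← Finset.sum_coe_sort c.support,
        ← e.symm.sum_comp (fun k : c.support => φ (c.coeff k) * α ^ ((b₀ + (i : ℕ)) * (k : ℕ)))]
      refine Finset.sum_congr rfl fun j _ => ?_
      rw [mul_assoc, ← pow_mul, ← pow_add]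
      congr 2
      ring)
  have hk : c.natDegree ∈ c.support := Polynomial.natDegree_mem_support_of_nonzero hc0
  have := congrFun hz (e ⟨_, hk⟩)
  simp only [Equiv.symm_apply_apply, Pi.zero_apply, mul_eq_zero, pow_eq_zero_iff', hα0, false_and,
    or_false, map_eq_zero] at this
  exact Polynomial.mem_support_iff.1 hk this
end

section
/- (The X-syndrome code of a coprime BB code is the cyclic code generated by g.) Let N ≥ 1, let a, b be polynomials over F₂ = ZMod 2 of degree < N with coefficient vectors va, vb ∈ (ZMod 2)^N, let A = circulant va, B = circulant vb, H_X = [A B], and let g = gcd(gcd(a,b), X^N − 1). Let φ : (ZMod 2)^N → (ZMod 2)[X]/(X^N − 1) be the linear map sending a vector u to the residue class of Σᵢ uᵢ Xⁱ. Then a syndrome vector s ∈ (ZMod 2)^N lies in the column space of H_X (i.e. s = H_X·e for some e ∈ (ZMod 2)^{2N}) if and only if φ(s) lies in the principal ideal of (ZMod 2)[X]/(X^N − 1) generated by the image ḡ of g. -/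
open Matrix Polynomial

/-- The residue class in `(ZMod 2)[X]/(X^N - 1)` of the polynomial `∑ i, uᵢ Xⁱ`
associated with a coefficient vector `u ∈ (ZMod 2)^N`. -/
noncomputable def phi (N : ℕ) (u : Fin N → ZMod 2) :
    Polynomial (ZMod 2) ⧸ Ideal.span {(Polynomial.X ^ N - 1 : Polynomial (ZMod 2))} :=
  Ideal.Quotient.mk _ (polyOfVec u)

theorem polyOfVec_coeffs {N : ℕ} (p : Polynomial (ZMod 2)) (hp : p.natDegree < N) :
    polyOfVec (fun i : Fin N => p.coeff i) = p := by
  unfold polyOfVec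
  rw [Fin.sum_univ_eq_sum_range (fun i => C (p.coeff i) * X ^ i) N]
  exact (p.as_sum_range_C_mul_X_pow' hp).symm

theorem polyOfVec_degree_lt {N : ℕ} (u : Fin N → ZMod 2) : (polyOfVec u).degree < N := by
  unfold polyOfVec
  refine lt_of_le_of_lt (degree_sum_le _ _) ?_
  refine (Finset.sup_lt_iff (WithBot.bot_lt_coe N)).2 ?_
  intro i _
  exact lt_of_le_of_lt (degree_C_mul_X_pow_le _ _) (WithBot.coe_lt_coe.2 i.2)

theorem polyOfVec_coeff {N : ℕ} (u : Fin N → ZMod 2) (i : Fin N) :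
    (polyOfVec u).coeff i = u i := by
  unfold polyOfVec
  simp [coeff_X_pow, Fin.val_inj]

theorem polyOfVec_add {N : ℕ} (u v : Fin N → ZMod 2) :
    polyOfVec (u + v) = polyOfVec u + polyOfVec v := by
  simp [polyOfVec, add_mul, Finset.sum_add_distrib]

theorem phi_injective (N : ℕ) (hN : 1 ≤ N) (u v : Fin N → ZMod 2)
    (h : phi N u = phi N v) : u = v := by
  unfold phi at h
  rw [Ideal.Quotient.eq, Ideal.mem_span_singleton] at h
  have hd : (polyOfVec u - polyOfVec v).degree < (X ^ N - 1 : Polynomial (ZMod 2)).degree := by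
    have h1 : (X ^ N - 1 : Polynomial (ZMod 2)).degree = N := by
      simpa using degree_X_pow_sub_C (R := ZMod 2) (n := N) hN 1
    rw [h1]
    exact lt_of_le_of_lt (degree_sub_le _ _)
      (max_lt (polyOfVec_degree_lt u) (polyOfVec_degree_lt v))
  have h0 := sub_eq_zero.1 (eq_zero_of_dvd_of_degree_lt h hd)
  funext i
  rw [← polyOfVec_coeff u i, h0, polyOfVec_coeff]

theorem phi_surjective (N : ℕ) (hN : 1 ≤ N)
    (p : Polynomial (ZMod 2) ⧸ Ideal.span {(Polynomial.X ^ N - 1 : Polynomial (ZMod 2))}) :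
    ∃ u, phi N u = p := by
  obtain ⟨p, rfl⟩ := Ideal.Quotient.mk_surjective p
  have hm : (X ^ N - 1 : Polynomial (ZMod 2)).Monic := by
    simpa using monic_X_pow_sub_C (1 : ZMod 2) (n := N) (by omega)
  have hd : (X ^ N - 1 : Polynomial (ZMod 2)).natDegree = N := by
    simpa using natDegree_X_pow_sub_C (n := N) (r := (1 : ZMod 2))
  have hlt : (p %ₘ (X ^ N - 1)).natDegree < N := by
    have := natDegree_modByMonic_lt p hm (by intro h; rw [h] at hd; simp at hd; omega)
    rwa [hd] at this
  refine ⟨fun i => (p %ₘ (X ^ N - 1)).coeff i, ?_⟩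
  unfold phi
  rw [polyOfVec_coeffs _ hlt, Ideal.Quotient.eq, Ideal.mem_span_singleton]
  refine ⟨-(p /ₘ (X ^ N - 1)), ?_⟩
  have := modByMonic_add_div p (X ^ N - 1 : Polynomial (ZMod 2))
  linear_combination this

theorem phi_circulant (N : ℕ) (v e : Fin N → ZMod 2) :
    phi N ((circulant v).mulVec e) = phi N v * phi N e := by
  cases N with
  | zero => simp [phi, polyOfVec]
  | succ n =>
  unfold phi polyOfVec
  set q := Ideal.Quotient.mk (Ideal.span {(X ^ (n + 1) - 1 : Polynomial (ZMod 2))}) with hq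
  have hx : q X ^ (n + 1) = 1 := by
    rw [← map_pow, ← map_one q, hq, Ideal.Quotient.eq]
    exact Ideal.mem_span_singleton_self _
  simp only [map_sum, map_mul, map_pow, mulVec, dotProduct, circulant_apply]
  rw [Finset.sum_mul_sum]
  simp only [Finset.sum_mul]
  rw [Finset.sum_comm]
  conv_rhs => rw [Finset.sum_comm]
  refine Finset.sum_congr rfl fun j _ => ?_
  rw [← Equiv.sum_comp (Equiv.addRight j)]
  refine Finset.sum_congr rfl fun k _ => ?_
  have hp : q X ^ ((k + j : Fin (n + 1)) : ℕ) = q X ^ (k : ℕ) * q X ^ (j : ℕ) := by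
    rw [Fin.val_add, ← pow_add]
    exact (pow_eq_pow_mod _ hx).symm
  simp only [Equiv.coe_addRight, add_sub_cancel_right]
  rw [hp]
  ring

/-- The X-syndrome code of a coprime BB code is the cyclic code generated
by `g`: a syndrome `s` lies in the column space of `H_X = [circulant va, circulant vb]`
iff `φ(s)` lies in the principal ideal generated by the image of
`g = gcd(gcd(a,b), X^N - 1)`. -/
theorem bb_syndrome_code_eq_cyclic (N : ℕ) (hN : 1 ≤ N) (va vb : Fin N → ZMod 2)
    (a b : Polynomial (ZMod 2)) (ha : a = polyOfVec va) (hb : b = polyOfVec vb)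
    (g : Polynomial (ZMod 2)) (hg : g = gcd (gcd a b) (Polynomial.X ^ N - 1))
    (s : Fin N → ZMod 2) :
    (∃ e : Fin N ⊕ Fin N → ZMod 2,
        (Matrix.fromCols (Matrix.circulant va) (Matrix.circulant vb)).mulVec e = s) ↔
      phi N s ∈ Ideal.span
        {Ideal.Quotient.mk (Ideal.span {(Polynomial.X ^ N - 1 : Polynomial (ZMod 2))}) g} := by
  have key : ∀ e : Fin N ⊕ Fin N → ZMod 2,
      phi N ((fromCols (circulant va) (circulant vb)).mulVec e)
        = phi N va * phi N (e ∘ Sum.inl) + phi N vb * phi N (e ∘ Sum.inr) := by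
    intro e
    rw [fromCols_mulVec, ← phi_circulant, ← phi_circulant]
    unfold phi
    rw [polyOfVec_add, map_add]
  have hga : g ∣ a := hg ▸ (gcd_dvd_left _ _).trans (gcd_dvd_left _ _)
  have hgb : g ∣ b := hg ▸ (gcd_dvd_left _ _).trans (gcd_dvd_right _ _)
  have hpa : phi N va = Ideal.Quotient.mk _ a := by rw [ha]; rfl
  have hpb : phi N vb = Ideal.Quotient.mk _ b := by rw [hb]; rfl
  rw [Ideal.mem_span_singleton]
  constructor
  · rintro ⟨e, rfl⟩
    rw [key, hpa, hpb]
    exact dvd_add (Dvd.dvd.mul_right (_root_.map_dvd _ hga) _) (Dvd.dvd.mul_right (_root_.map_dvd _ hgb) _)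
  · rintro ⟨c, hc⟩
    obtain ⟨x, y, h1⟩ := exists_gcd_eq_mul_add_mul a b
    obtain ⟨z, w, h2⟩ := exists_gcd_eq_mul_add_mul (gcd a b) (X ^ N - 1 : Polynomial (ZMod 2))
    set q := Ideal.Quotient.mk (Ideal.span {(X ^ N - 1 : Polynomial (ZMod 2))}) with hq
    have hx : q (X ^ N - 1) = 0 :=
      Ideal.Quotient.eq_zero_iff_mem.2 (Ideal.mem_span_singleton_self _)
    have hgq : q g = (q a * q x + q b * q y) * q z := by
      rw [hg, h2, map_add, map_mul, map_mul _ (X ^ N - 1), hx, h1]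
      simp
    obtain ⟨e1, he1⟩ := phi_surjective N hN (q x * q z * c)
    obtain ⟨e2, he2⟩ := phi_surjective N hN (q y * q z * c)
    refine ⟨Sum.elim e1 e2, phi_injective N hN _ _ ?_⟩
    rw [key, Sum.elim_comp_inl, Sum.elim_comp_inr, he1, he2, hc, hgq, hpa, hpb]
    ring
end
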